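/- For every integer n ≥ 1, the set of chains of subsimplices of [n] is finite of cardinality exactly 3^{n−1}; equivalently, the chains of subsimplices of [n] are in bijection with the functions from {1, …, n−1} to a three-element set, i.e. with the facets of the (n−1)-dimensional cube. -/

import Mathlib

/-!
STATEMENT 13: For every integer `n ≥ 1`, the set of chains of subsimplices of `[n]` is finite
of cardinality exactly `3^(n-1)`; equivalently, the chains of subsimplices of `[n]` are in
bijection with the functions from `{1, …, n-1}` to a three-element set, i.e. with the facets
of the `(n-1)`-dimensional cube.
-/

/-- A chain of subsimplices of `[n] = {0, 1, …, n}`: a nonempty finite sequence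
`J₁, …, J_ℓ` of subsets of `{0, …, n}` such that each `J_a` has at least two elements,
`min J₁ = 0`, `max J_ℓ = n`, `max J_a = min J_{a+1}` for consecutive terms, and every
element of an earlier term is at most every element of a later term. -/
structure SubsimplexChain (n : ℕ) where
  /-- the underlying sequence `J₁, …, J_ℓ` of subsets of `{0, 1, …, n}` -/
  pieces : List (Finset (Fin (n + 1)))
  pieces_ne : pieces ≠ []
  two_le_card : ∀ J ∈ pieces, 2 ≤ J.card
  min_head : ∀ h : (pieces.head pieces_ne).Nonempty, (pieces.head pieces_ne).min' h = 0
  max_last : ∀ h : (pieces.getLast pieces_ne).Nonempty,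
    (pieces.getLast pieces_ne).max' h = Fin.last n
  adjacent : pieces.Chain' fun J K => ∀ (hJ : J.Nonempty) (hK : K.Nonempty),
    J.max' hJ = K.min' hK
  ordered : pieces.Pairwise fun J K => ∀ a ∈ J, ∀ b ∈ K, a ≤ b

/-!
Record, for every vertex strictly between the two ends, how many pieces of the chain contain it.
Consecutive pieces share exactly their common endpoint, so this number is `0` (the vertex is
skipped), `1` (it is interior to a piece) or `2` (it is a breakpoint). Conversely, any labelling by
`0, 1, 2` comes from exactly one chain: the first piece must end at the first vertex labelled `2`
(at the final vertex if there is none), and below its end it consists of the starting point and the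
vertices labelled `1`. What remains is a chain on a shorter interval that starts at this breakpoint.
-/

open Finset

section LinearOrder

variable {α : Type*} [LinearOrder α] {a b c x : α} {J : Finset α} {l t : List (Finset α)}

/-- `IsSubsimplexChain b a l` (end point first): `l` is a chain of subsimplices from `a` to `b` in
a linear order. The recursive presentation says that the first piece runs from `a` to some `c > a`
and the remaining pieces form a chain from `c` to `b`; the empty list is a chain exactly when
`a = b`. -/
inductive IsSubsimplexChain (b : α) : α → List (Finset α) → Prop
  | nil : IsSubsimplexChain b b []
  | cons {a c : α} {J : Finset α} {t : List (Finset α)} (least : IsLeast (J : Set α) a)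
      (greatest : IsGreatest (J : Set α) c) (lt : a < c) (tail : IsSubsimplexChain b c t) :
      IsSubsimplexChain b a (J :: t)

/-- The number of pieces of `l` that contain the vertex `x`. -/
def vertexMultiplicity (l : List (Finset α)) (x : α) : ℕ :=
  l.countP (x ∈ ·)

lemma vertexMultiplicity_cons (J : Finset α) (t : List (Finset α)) (x : α) :
    vertexMultiplicity (J :: t) x = vertexMultiplicity t x + if x ∈ J then 1 else 0 := by
  simp [vertexMultiplicity, List.countP_cons]

lemma vertexMultiplicity_cons_of_gt (hJ : c ∈ upperBounds (J : Set α)) (hx : c < x) :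
    vertexMultiplicity (J :: t) x = vertexMultiplicity t x := by
  have hxJ : x ∉ J := fun hxJ => hx.not_ge (hJ hxJ)
  rw [vertexMultiplicity_cons, if_neg hxJ, add_zero]

namespace IsSubsimplexChain

lemma le (h : IsSubsimplexChain b a l) : a ≤ b := by
  induction h with
  | nil => exact le_rfl
  | cons _ _ hlt _ ih => exact hlt.le.trans ih

lemma ne_nil (h : IsSubsimplexChain b a l) (hab : a ≠ b) : l ≠ [] := by
  rintro rfl
  cases h
  exact hab rfl

lemma start_le_of_mem (h : IsSubsimplexChain b a l) (hJ : J ∈ l) (hx : x ∈ J) : a ≤ x := by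
  induction h with
  | nil => simp at hJ
  | cons hleast _ hlt _ ih =>
    rcases List.mem_cons.1 hJ with rfl | hJ
    · exact hleast.2 hx
    · exact hlt.le.trans (ih hJ)

lemma two_le_card (h : IsSubsimplexChain b a l) : ∀ J ∈ l, 2 ≤ #J := by
  induction h with
  | nil => simp
  | cons hleast hgreatest hlt _ ih =>
    exact List.forall_mem_cons.2
      ⟨one_lt_card.2 ⟨_, hleast.1, _, hgreatest.1, hlt.ne⟩, ih⟩

lemma isLeast_head (h : IsSubsimplexChain b a l) (hl : l ≠ []) :
    IsLeast (l.head hl : Set α) a := by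
  cases h with
  | nil => exact absurd rfl hl
  | cons hleast => exact hleast

lemma isGreatest_getLast (h : IsSubsimplexChain b a l) (hl : l ≠ []) :
    IsGreatest (l.getLast hl : Set α) b := by
  induction h with
  | nil => exact absurd rfl hl
  | @cons _ _ _ t _ hgreatest _ htail ih =>
    cases t with
    | nil => cases htail; exact hgreatest
    | cons K s => exact ih (List.cons_ne_nil K s)

lemma isChain_max'_eq_min' (h : IsSubsimplexChain b a l) :
    l.IsChain fun J K => ∀ (hJ : J.Nonempty) (hK : K.Nonempty), J.max' hJ = K.min' hK := by
  induction h with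
  | nil => exact .nil
  | cons _ hgreatest _ htail ih =>
    cases htail with
    | nil => exact .singleton _
    | cons hleast =>
      exact .cons_cons (fun hJ hK => ((isGreatest_max' _ hJ).unique hgreatest).trans
        (hleast.unique (isLeast_min' _ hK))) ih

lemma pairwise_le (h : IsSubsimplexChain b a l) :
    l.Pairwise fun J K => ∀ x ∈ J, ∀ y ∈ K, x ≤ y := by
  induction h with
  | nil => exact .nil
  | cons _ hgreatest _ htail ih =>
    exact .cons (fun K hK x hx y hy => (hgreatest.2 hx).trans (htail.start_le_of_mem hK hy)) ih

lemma of_adjacent (hl : l ≠ []) (hcard : ∀ J ∈ l, 2 ≤ #J)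
    (hhead : IsLeast (l.head hl : Set α) a) (hlast : IsGreatest (l.getLast hl : Set α) b)
    (hadj : l.IsChain fun J K => ∀ (hJ : J.Nonempty) (hK : K.Nonempty), J.max' hJ = K.min' hK) :
    IsSubsimplexChain b a l := by
  induction l generalizing a with
  | nil => exact absurd rfl hl
  | cons J t ih =>
    obtain ⟨hcardJ, hcardt⟩ := List.forall_mem_cons.1 hcard
    have hJ : J.Nonempty := ⟨a, hhead.1⟩
    have hlt : a < J.max' hJ := by
      obtain ⟨x, hx, hxa⟩ := exists_mem_ne hcardJ a
      exact ((hhead.2 hx).lt_of_ne' hxa).trans_le (J.le_max' x hx)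
    refine .cons hhead (J.isGreatest_max' hJ) hlt ?_
    cases t with
    | nil => exact (J.isGreatest_max' hJ).unique hlast ▸ .nil
    | cons K s =>
      rw [List.isChain_cons_cons] at hadj
      have hK : K.Nonempty := card_pos.1 (zero_lt_two.trans_le (hcardt K List.mem_cons_self))
      have hheadK : IsLeast (K : Set α) (J.max' hJ) := hadj.1 hJ hK ▸ K.isLeast_min' hK
      exact ih (List.cons_ne_nil K s) hcardt hheadK hlast hadj.2

lemma vertexMultiplicity_of_lt (h : IsSubsimplexChain b a l) (hx : x < a) :
    vertexMultiplicity l x = 0 :=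
  List.countP_eq_zero.2 fun _ hJ => by simpa using fun hxJ => hx.not_ge (h.start_le_of_mem hJ hxJ)

lemma vertexMultiplicity_cons_of_lt (ht : IsSubsimplexChain b c t) (hx : x < c) :
    vertexMultiplicity (J :: t) x = if x ∈ J then 1 else 0 := by
  rw [vertexMultiplicity_cons, ht.vertexMultiplicity_of_lt hx, zero_add]

lemma vertexMultiplicity_start (h : IsSubsimplexChain b a l) (hab : a < b) :
    vertexMultiplicity l a = 1 := by
  cases h with
  | nil => exact absurd hab (lt_irrefl _)
  | cons hleast _ hlt htail =>
    rw [htail.vertexMultiplicity_cons_of_lt hlt, if_pos (mem_coe.1 hleast.1)]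

lemma vertexMultiplicity_cons_start (ht : IsSubsimplexChain b c t) (hc : c ∈ J) (hcb : c < b) :
    vertexMultiplicity (J :: t) c = 2 := by
  rw [vertexMultiplicity_cons, ht.vertexMultiplicity_start hcb, if_pos hc]

lemma vertexMultiplicity_le_two (h : IsSubsimplexChain b a l) (hx : x < b) :
    vertexMultiplicity l x ≤ 2 := by
  induction h with
  | nil => simp [vertexMultiplicity]
  | @cons _ c J t _ hgreatest _ htail ih =>
    rcases lt_trichotomy x c with hxc | rfl | hxc
    · rw [htail.vertexMultiplicity_cons_of_lt hxc]
      split_ifs <;> simp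
    · exact (htail.vertexMultiplicity_cons_start hgreatest.1 hx).le
    · rw [vertexMultiplicity_cons_of_gt hgreatest.2 hxc]
      exact ih

section Injectivity

variable {c' : α} {J' : Finset α} {t' l' : List (Finset α)}

lemma first_breakpoint_le (hJ : c ∈ J) (hac : a < c) (ht : IsSubsimplexChain b c t)
    (ht' : IsSubsimplexChain b c' t')
    (heq : ∀ x ∈ Set.Ioo a b, vertexMultiplicity (J :: t) x = vertexMultiplicity (J' :: t') x) :
    c' ≤ c := by
  by_contra! hlt
  have hcb : c < b := hlt.trans_le ht'.le
  have htwo := heq c ⟨hac, hcb⟩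
  rw [ht.vertexMultiplicity_cons_start hJ hcb, ht'.vertexMultiplicity_cons_of_lt hlt] at htwo
  split_ifs at htwo
  all_goals contradiction

lemma first_piece_subset (hlower : a ∈ lowerBounds (J : Set α))
    (hupper : c ∈ upperBounds (J : Set α)) (ha : a ∈ J') (hc : c ∈ J')
    (ht : IsSubsimplexChain b c t) (ht' : IsSubsimplexChain b c t')
    (heq : ∀ x ∈ Set.Ioo a b, vertexMultiplicity (J :: t) x = vertexMultiplicity (J' :: t') x) :
    J ⊆ J' := by
  intro x hx
  rcases (hlower hx).eq_or_lt with rfl | hax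
  · exact ha
  rcases (hupper hx).eq_or_lt with rfl | hxc
  · exact hc
  have hone := heq x ⟨hax, hxc.trans_le ht.le⟩
  rw [ht.vertexMultiplicity_cons_of_lt hxc, ht'.vertexMultiplicity_cons_of_lt hxc, if_pos hx]
    at hone
  by_contra hx'
  simp [hx'] at hone

theorem eq_of_vertexMultiplicity_eq (h : IsSubsimplexChain b a l) (h' : IsSubsimplexChain b a l')
    (heq : ∀ x ∈ Set.Ioo a b, vertexMultiplicity l x = vertexMultiplicity l' x) : l = l' := by
  induction h generalizing l' with
  | nil =>
    cases h' with
    | nil => rfl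
    | cons _ _ hlt htail => exact absurd htail.le hlt.not_ge
  | @cons _ c J t hleast hgreatest hlt htail ih =>
    cases h' with
    | nil => exact absurd htail.le hlt.not_ge
    | @cons _ c' J' t' hleast' hgreatest' hlt' htail' =>
      have heq' := fun x hx => (heq x hx).symm
      obtain rfl : c = c' := le_antisymm
        (first_breakpoint_le hgreatest'.1 hlt' htail' htail heq')
        (first_breakpoint_le hgreatest.1 hlt htail htail' heq)
      obtain rfl : J = J' := Subset.antisymm
        (first_piece_subset hleast.2 hgreatest.2 hleast'.1 hgreatest'.1 htail htail' heq)
        (first_piece_subset hleast'.2 hgreatest'.2 hleast.1 hgreatest.1 htail' htail heq')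
      have heqTail : ∀ x ∈ Set.Ioo c b, vertexMultiplicity t x = vertexMultiplicity t' x :=
        fun x hx => by
          rw [← vertexMultiplicity_cons_of_gt hgreatest.2 hx.1, heq x ⟨hlt.trans hx.1, hx.2⟩,
            vertexMultiplicity_cons_of_gt hgreatest.2 hx.1]
      rw [ih htail' heqTail]

end Injectivity

end IsSubsimplexChain

section Surjectivity

variable [LocallyFiniteOrder α]

lemma exists_first_breakpoint (P : α → Prop) (hab : a < b) :
    ∃ c ∈ Set.Ioc a b, (c < b → P c) ∧ ∀ x ∈ Set.Ioo a c, ¬ P x := by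
  classical
  let candidates : Finset α := {x ∈ Ioc a b | x < b → P x}
  have hne : candidates.Nonempty := ⟨b, by simp [candidates, hab]⟩
  obtain ⟨hc, hPc⟩ := mem_filter.1 (candidates.min'_mem hne)
  refine ⟨candidates.min' hne, mem_Ioc.1 hc, hPc, fun x hx hPx => hx.2.not_ge ?_⟩
  exact candidates.min'_le x (mem_filter.2
    ⟨mem_Ioc.2 ⟨hx.1, hx.2.le.trans (mem_Ioc.1 hc).2⟩, fun _ => hPx⟩)

lemma exists_isLeast_isGreatest_mem_iff (P : α → Prop) (hac : a ≤ c) :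
    ∃ J : Finset α, IsLeast (J : Set α) a ∧ IsGreatest (J : Set α) c ∧
      ∀ x ∈ Set.Ioo a c, x ∈ J ↔ P x := by
  classical
  refine ⟨{x ∈ Icc a c | x = a ∨ x = c ∨ P x}, ⟨by simp [hac], fun x hx => ?_⟩,
    ⟨by simp [hac], fun x hx => ?_⟩, fun x hx => ?_⟩
  · exact (mem_Icc.1 (mem_filter.1 hx).1).1
  · exact (mem_Icc.1 (mem_filter.1 hx).1).2
  · simp [hx.1.le, hx.2.le, hx.1.ne', hx.2.ne]

theorem exists_isSubsimplexChain_vertexMultiplicity_eq {a b : α} (hab : a ≤ b) (β : α → ℕ)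
    (hβ : ∀ x ∈ Set.Ioo a b, β x ≤ 2) :
    ∃ l, IsSubsimplexChain b a l ∧ ∀ x ∈ Set.Ioo a b, vertexMultiplicity l x = β x := by
  rcases hab.eq_or_lt with rfl | hab
  · exact ⟨[], .nil, by simp⟩
  obtain ⟨c, ⟨hac, hcb⟩, hβc, hβ_ne_two⟩ := exists_first_breakpoint (β · = 2) hab
  obtain ⟨J, hleast, hgreatest, hJ⟩ := exists_isLeast_isGreatest_mem_iff (β · = 1) hac.le
  obtain ⟨t, ht, hmult⟩ := exists_isSubsimplexChain_vertexMultiplicity_eq hcb β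
    fun x hx => hβ x ⟨hac.trans hx.1, hx.2⟩
  refine ⟨J :: t, .cons hleast hgreatest hac ht, fun x hx => ?_⟩
  rcases lt_trichotomy x c with hxc | rfl | hxc
  · have hx_ne_two := hβ_ne_two x ⟨hx.1, hxc⟩
    have hx_le_two := hβ x hx
    rw [ht.vertexMultiplicity_cons_of_lt hxc]
    simp only [hJ x ⟨hx.1, hxc⟩]
    split_ifs <;> omega
  · rw [ht.vertexMultiplicity_cons_start hgreatest.1 hx.2, hβc hx.2]
  · rw [vertexMultiplicity_cons_of_gt hgreatest.2 hxc, hmult x ⟨hxc, hx.2⟩]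
termination_by #(Icc a b)
decreasing_by exact card_lt_card (Icc_ssubset_Icc_left hab.le hac le_rfl)

end Surjectivity

/-- The function on the open interval `(a, b)` attached to a chain from `a` to `b`, i.e. the
corresponding facet of the cube: `0`, `1`, `2` stand for skipped vertices, vertices interior to a
piece, and breakpoints. -/
def facetLabel (l : {l // IsSubsimplexChain b a l}) (x : Set.Ioo a b) : Fin 3 :=
  ⟨vertexMultiplicity l.1 x, Nat.lt_succ_of_le (l.2.vertexMultiplicity_le_two x.2.2)⟩

lemma facetLabel_injective :
    Function.Injective (facetLabel : {l // IsSubsimplexChain b a l} → Set.Ioo a b → Fin 3) :=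
  fun l l' heq => Subtype.ext <| l.2.eq_of_vertexMultiplicity_eq l'.2 fun x hx =>
    congrArg Fin.val (congrFun heq ⟨x, hx⟩)

lemma facetLabel_surjective [LocallyFiniteOrder α] (hab : a ≤ b) :
    Function.Surjective (facetLabel : {l // IsSubsimplexChain b a l} → Set.Ioo a b → Fin 3) := by
  intro β
  obtain ⟨l, hl, hmult⟩ := exists_isSubsimplexChain_vertexMultiplicity_eq hab
    (fun x => if hx : x ∈ Set.Ioo a b then β ⟨x, hx⟩ else 0)
    fun x hx => by simpa only [dif_pos hx] using Nat.le_of_lt_succ (β ⟨x, hx⟩).isLt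
  refine ⟨⟨l, hl⟩, funext fun x => Fin.ext ?_⟩
  exact (hmult x x.2).trans (by rw [dif_pos x.2])

theorem card_subsimplexChain_general [LocallyFiniteOrder α] (hab : a ≤ b) :
    Finite {l // IsSubsimplexChain b a l} ∧
      Nat.card {l // IsSubsimplexChain b a l} = 3 ^ #(Ioo a b) ∧
      Nonempty ({l // IsSubsimplexChain b a l} ≃ (Fin #(Ioo a b) → Fin 3)) := by
  have vertices : Set.Ioo a b ≃ Fin #(Ioo a b) :=
    Fintype.equivFinOfCardEq (Fintype.card_ofFinset _ _)
  have e : {l // IsSubsimplexChain b a l} ≃ (Fin #(Ioo a b) → Fin 3) :=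
    (Equiv.ofBijective facetLabel ⟨facetLabel_injective, facetLabel_surjective hab⟩).trans
      (vertices.arrowCongr (.refl _))
  exact ⟨.of_equiv _ e.symm, by simp [Nat.card_congr e], ⟨e⟩⟩

end LinearOrder

namespace SubsimplexChain

variable {n : ℕ}

lemma isSubsimplexChain_pieces (C : SubsimplexChain n) :
    IsSubsimplexChain (Fin.last n) 0 C.pieces := by
  have hnonempty : ∀ J ∈ C.pieces, J.Nonempty := fun J hJ =>
    card_pos.1 (zero_lt_two.trans_le (C.two_le_card J hJ))
  have hhead := hnonempty _ (List.head_mem C.pieces_ne)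
  have hlast := hnonempty _ (List.getLast_mem C.pieces_ne)
  exact .of_adjacent C.pieces_ne C.two_le_card (C.min_head hhead ▸ isLeast_min' _ hhead)
    (C.max_last hlast ▸ isGreatest_max' _ hlast) C.adjacent

/-- For `n ≥ 1`, the chains of subsimplices of `[n]` are the recursively presented chains from `0`
to `n`. For `n = 0` the empty list is a chain only in the recursive sense. -/
def equivIsSubsimplexChain (hn : 1 ≤ n) :
    SubsimplexChain n ≃ {l // IsSubsimplexChain (Fin.last n) 0 l} where
  toFun C := ⟨C.pieces, C.isSubsimplexChain_pieces⟩
  invFun l :=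
    have hne : l.1 ≠ [] := l.2.ne_nil (Fin.ne_of_val_ne (Nat.ne_of_lt hn))
    { pieces := l.1
      pieces_ne := hne
      two_le_card := l.2.two_le_card
      min_head := fun h => (isLeast_min' _ h).unique (l.2.isLeast_head hne)
      max_last := fun h => (isGreatest_max' _ h).unique (l.2.isGreatest_getLast hne)
      adjacent := l.2.isChain_max'_eq_min'
      ordered := l.2.pairwise_le }
  left_inv _ := rfl
  right_inv _ := rfl

end SubsimplexChain

theorem card_subsimplexChain (n : ℕ) (hn : 1 ≤ n) :
    Finite (SubsimplexChain n) ∧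
      Nat.card (SubsimplexChain n) = 3 ^ (n - 1) ∧
      Nonempty (SubsimplexChain n ≃ (Fin (n - 1) → Fin 3)) := by
  have e := SubsimplexChain.equivIsSubsimplexChain hn
  rw [e.finite_iff, Nat.card_congr e, (e.equivCongr (.refl _)).nonempty_congr]
  simpa using card_subsimplexChain_general (Fin.zero_le (Fin.last n))
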